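/- arXiv:2510.13484 — 5 statements merged into one kernel-verified Lean document; each statement's English description precedes it below -/
import Mathlib

section
/- Let n ≥ 4. Then max{|im(α)| : α ∈ PRD_n^*} = n − ⌊n/3⌋, i.e. the maximum size of the image of an oriented order-decreasing partial transformation on X_n that is neither orientation-preserving nor monotone equals n − ⌊n/3⌋. -/
/-!
Partial transformations on the chain X_n = {1 < 2 < ... < n}, encoded as
functions `ℕ → Option ℕ` (with `none` meaning "undefined"), composed
left-to-right: `x(αβ) = (xα)β`.
-/

namespace OrientedPT

noncomputable section
open scoped Classical

/-- A partial transformation, as a partial map on `ℕ`. -/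
def PTrans : Type := ℕ → Option ℕ

instance : Mul PTrans := ⟨fun f g x => (f x).bind g⟩

theorem mul_apply (f g : PTrans) (x : ℕ) : (f * g) x = (f x).bind g := rfl

instance : Semigroup PTrans where
  mul_assoc f g h := by
    funext x
    show ((f x).bind g).bind h = (f x).bind (fun y => (g y).bind h)
    cases f x <;> rfl

/-- The domain of a partial transformation. -/
def domSet (f : PTrans) : Set ℕ := {x | f x ≠ none}

/-- The image of a partial transformation. -/
def im (f : PTrans) : Set ℕ := {y | ∃ x, f x = some y}

/-- The set of fixed points: `fix(α) = {x ∈ dom α : xα = x}`. -/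
def fixSet (f : PTrans) : Set ℕ := {x | f x = some x}

/-- The value of `f` at `x` (defaulting to `0` off the domain). -/
def val (f : PTrans) (x : ℕ) : ℕ := (f x).getD 0

/-- `f` is a partial transformation on `X_n = {1,…,n}`. -/
def IsPT (n : ℕ) (f : PTrans) : Prop :=
  domSet f ⊆ Set.Icc 1 n ∧ im f ⊆ Set.Icc 1 n

/-- Order-decreasing: `xα ≤ x` for all `x ∈ dom α`. -/
def OrderDecr (f : PTrans) : Prop := ∀ x y, f x = some y → y ≤ x

/-- Order-preserving. -/
def OrderPres (f : PTrans) : Prop :=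
  ∀ x y u v, f x = some u → f y = some v → x ≤ y → u ≤ v

/-- Order-reversing. -/
def OrderRev (f : PTrans) : Prop :=
  ∀ x y u v, f x = some u → f y = some v → x ≤ y → v ≤ u

/-- Monotone: order-preserving or order-reversing. -/
def IsMonotone (f : PTrans) : Prop := OrderPres f ∨ OrderRev f

/-- Injectivity of a partial transformation. -/
def Inj (f : PTrans) : Prop := ∀ x y z, f x = some z → f y = some z → x = y

/-- The cyclic successor of `a` in the set `D`: the least element of `D`
above `a` if there is one, and otherwise the least element of `D`. -/
def cycSucc (D : Set ℕ) (a : ℕ) : ℕ :=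
  if {x ∈ D | a < x}.Nonempty then sInf {x ∈ D | a < x} else sInf D

/-- The cyclic descents of `f`: those `a ∈ dom f` whose cyclic successor in
`dom f` has a strictly smaller value. Writing `dom f = {x₁ < ⋯ < x_t}` these
are exactly the indices `1 ≤ i ≤ t` with `x_{i+1}α < x_iα` (where `x_{t+1} = x₁`). -/
def descents (f : PTrans) : Set ℕ :=
  {a ∈ domSet f | val f (cycSucc (domSet f) a) < val f a}

/-- The cyclic ascents of `f`. -/
def ascents (f : PTrans) : Set ℕ :=
  {a ∈ domSet f | val f a < val f (cycSucc (domSet f) a)}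

/-- Orientation-preserving: at most one cyclic descent. -/
def OrientPres (f : PTrans) : Prop := (descents f).ncard ≤ 1

/-- Orientation-reversing: at most one cyclic ascent. -/
def OrientRev (f : PTrans) : Prop := (ascents f).ncard ≤ 1

/-- Oriented: orientation-preserving or orientation-reversing. -/
def Oriented (f : PTrans) : Prop := OrientPres f ∨ OrientRev f

/-- `PORD n`: all oriented and order-decreasing partial transformations on `X_n`. -/
def PORD (n : ℕ) : Set PTrans := {f | IsPT n f ∧ Oriented f ∧ OrderDecr f}

/-- `PORD(n,r) = {α ∈ PORD_n : |im α| ≤ r}`. -/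
def PORDr (n r : ℕ) : Set PTrans := {f ∈ PORD n | (im f).ncard ≤ r}

/-- `POPD n`: the orientation-preserving elements of `PORD n`. -/
def POPD (n : ℕ) : Set PTrans := {f ∈ PORD n | OrientPres f}

/-- `PORD_n^* = PORD_n \ POPD_n`. -/
def PORDstar (n : ℕ) : Set PTrans := PORD n \ POPD n

/-- `PMD n`: monotone and order-decreasing partial transformations on `X_n`. -/
def PMD (n : ℕ) : Set PTrans := {f | IsPT n f ∧ IsMonotone f ∧ OrderDecr f}

/-- `PRD_n^* = PORD_n^* \ PMD_n`. -/
def PRDstar (n : ℕ) : Set PTrans := PORDstar n \ PMD n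

/-- `IORD n`: the injective elements of `PORD n`. -/
def IORD (n : ℕ) : Set PTrans := {f ∈ PORD n | Inj f}

/-- `IORD(n,r) = {α ∈ IORD_n : |im α| ≤ r}`. -/
def IORDr (n r : ℕ) : Set PTrans := {f ∈ IORD n | (im f).ncard ≤ r}

/-- `A` is a generating set of `S`: `A ⊆ S` and the smallest subsemigroup
containing `A` is `S`. -/
def IsGenSet (S A : Set PTrans) : Prop :=
  A ⊆ S ∧ (Subsemigroup.closure A : Set PTrans) = S

/-- A minimal generating set: a generating set of minimum cardinality. -/
def IsMinGenSet (S A : Set PTrans) : Prop :=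
  IsGenSet S A ∧ ∀ B : Set PTrans, IsGenSet S B → A.ncard ≤ B.ncard

/-- The rank of `S`: the minimum cardinality of a generating set of `S`. -/
def rank (S : Set PTrans) : ℕ :=
  sInf {k | ∃ A : Set PTrans, IsGenSet S A ∧ A.ncard = k}

/-- `z` is undecomposable in `S`: `z = xy` with `x, y ∈ S` forces `z = x` or `z = y`. -/
def Undecomposable (S : Set PTrans) (z : PTrans) : Prop :=
  ∀ x ∈ S, ∀ y ∈ S, z = x * y → z = x ∨ z = y

/-- `T` is a subsemigroup of (the semigroup given by the subset) `S`. -/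
def IsSubsemigroupOf (T S : Set PTrans) : Prop :=
  T ⊆ S ∧ ∀ a ∈ T, ∀ b ∈ T, a * b ∈ T

/-- `T` is a maximal subsemigroup of `S`: a maximal element, under inclusion,
of the family of proper subsemigroups of `S`. -/
def IsMaximalSubsemigroup (S T : Set PTrans) : Prop :=
  IsSubsemigroupOf T S ∧ T ≠ S ∧
    ∀ U : Set PTrans, IsSubsemigroupOf U S → U ≠ S → T ⊆ U → T = U

/-- The restriction of `f` to `Y`. -/
def restrict (f : PTrans) (Y : Set ℕ) : PTrans :=
  fun x => if x ∈ Y then f x else none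

/-- The partial identity `1_Y` on `Y`. -/
def partialId (Y : Set ℕ) : PTrans := fun x => if x ∈ Y then some x else none

/-- `ξ_{p,q}`: domain `[p, q+1]`, fixes every point of `[p,q]`, maps `q+1` to `p`. -/
def xi (p q : ℕ) : PTrans := fun x =>
  if p ≤ x ∧ x ≤ q then some x else if x = q + 1 then some p else none

/-- `γ_{p,q}` (for `1 ≤ p ≤ q−2 ≤ n−2`): with `k = min(p−1, q−p−1)` and
`l = min(q−p−1, n−q)`, it has domain `[p, p+k] ∪ [q, q+l]` and maps
`p+i ↦ p−i` and `q+j ↦ q−j`. -/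
def gamma (n p q : ℕ) : PTrans := fun x =>
  if p ≤ x ∧ x ≤ p + min (p - 1) (q - p - 1) then some (2 * p - x)
  else if q ≤ x ∧ x ≤ q + min (q - p - 1) (n - q) then some (2 * q - x)
  else none

/-- `γ_{p,q}^{r,s}`: with `u = min(r−s, q−p, n−q+1)`, it has domain
`[p, p+s−1] ∪ [q, q+u−1]` and maps `p+i ↦ p−i` and `q+j ↦ q−j`. -/
def gammaRS (n r p q s : ℕ) : PTrans := fun x =>
  if p ≤ x ∧ x + 1 ≤ p + s then some (2 * p - x)
  else if q ≤ x ∧ x + 1 ≤ q + min (r - s) (min (q - p) (n - q + 1)) then some (2 * q - x)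
  else none

/-- `δ^a_Y`: domain `Y ∪ {a}`, fixes every point of `Y`, maps `a` to `a−1`. -/
def deltaMap (a : ℕ) (Y : Set ℕ) : PTrans :=
  fun x => if x ∈ Y then some x else if x = a then some (a - 1) else none

/-- `ζ_Z`: with `a = max Z` and `b = min Z`, domain `Z ∪ {a+1}`, fixes every
point of `Z`, maps `a+1` to `b−1`. -/
def zetaMap (Z : Set ℕ) : PTrans :=
  fun x => if x ∈ Z then some x else if x = sSup Z + 1 then some (sInf Z - 1) else none

/-- `E_r`: the idempotents of `PORD_n` with image of size exactly `r`. -/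
def Eset (n r : ℕ) : Set PTrans := {f ∈ PORD n | f * f = f ∧ (im f).ncard = r}

/-- `F_r = {ξ_{p,q}^r : 1 ≤ p ≤ n−2, p+1 ≤ q ≤ p+r−2 ≤ n−1}`. -/
def Fset (n r : ℕ) : Set PTrans :=
  {f | ∃ p q : ℕ, 1 ≤ p ∧ p + 2 ≤ n ∧ p + 1 ≤ q ∧ q + 2 ≤ p + r ∧ p + r ≤ n + 1 ∧
    f = xi p q}

/-- `G_n = {γ_{p,q} : 1 ≤ p ≤ q−2 ≤ n−2} \ {γ_{1,n}}`. -/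
def Gset (n : ℕ) : Set PTrans :=
  {f | ∃ p q : ℕ, 1 ≤ p ∧ p + 2 ≤ q ∧ q ≤ n ∧ f = gamma n p q} \ {gamma n 1 n}

/-- `H_n^r = {γ_{p,q}^{r,s} : 1 ≤ p ≤ q−2 ≤ n−2, 1 ≤ s ≤ min{p, q−p, r−1}, (q,s) ≠ (n,1)}`. -/
def Hset (n r : ℕ) : Set PTrans :=
  {f | ∃ p q s : ℕ, 1 ≤ p ∧ p + 2 ≤ q ∧ q ≤ n ∧ 1 ≤ s ∧
    s ≤ min p (min (q - p) (r - 1)) ∧ ¬(q = n ∧ s = 1) ∧ f = gammaRS n r p q s}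

/-- `EI_r = {1_Y : Y ⊆ X_n, |Y| = r}`. -/
def EIset (n r : ℕ) : Set PTrans :=
  {f | ∃ Y : Set ℕ, Y ⊆ Set.Icc 1 n ∧ Y.ncard = r ∧ f = partialId Y}

/-- `FI_r = {δ^a_Y : 2 ≤ a ≤ n, Y ⊆ X_n \ {a−1,a}, |Y| = r−1}`. -/
def FIset (n r : ℕ) : Set PTrans :=
  {f | ∃ (a : ℕ) (Y : Set ℕ), 2 ≤ a ∧ a ≤ n ∧ Y ⊆ Set.Icc 1 n \ {a - 1, a} ∧
    Y.ncard = r - 1 ∧ f = deltaMap a Y}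

/-- `GI_k = {ζ_Z : Z ⊆ X_n \ {1,n}, |Z| = k−1}`. -/
def GIset (n k : ℕ) : Set PTrans :=
  {f | ∃ Z : Set ℕ, Z ⊆ Set.Icc 1 n \ {1, n} ∧ Z.ncard = k - 1 ∧ f = zetaMap Z}

/-- `GI_k^c`: those `ζ_Z ∈ GI_k` with `Z` a convex subset (an interval). -/
def GIcset (n k : ℕ) : Set PTrans :=
  {f | ∃ Z : Set ℕ, Z ⊆ Set.Icc 1 n \ {1, n} ∧ Z.ncard = k - 1 ∧ Z.OrdConnected ∧
    f = zetaMap Z}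

/-- `F^r_{p,q} = {α ∈ PORD(n,r) : α restricted to [p, q+1] equals ξ_{p,q}^r}`. -/
def Frestr (n r p q : ℕ) : Set PTrans :=
  {f ∈ PORDr n r | restrict f (Set.Icc p (q + 1)) = xi p q}

/-- `G_{p,q} = {α ∈ PORD^*(n,r) : α restricted to dom(γ_{p,q}) equals γ_{p,q}}`. -/
def Grestr (n r p q : ℕ) : Set PTrans :=
  {f ∈ PORDr n r ∩ PORDstar n | restrict f (domSet (gamma n p q)) = gamma n p q}

/-- `H^{r,s}_{p,q} = {α ∈ PORD^*(n,r) : α restricted to dom(γ^{r,s}_{p,q}) equals γ^{r,s}_{p,q}}`. -/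
def Hrestr (n r p q s : ℕ) : Set PTrans :=
  {f ∈ PORDr n r ∩ PORDstar n |
    restrict f (domSet (gammaRS n r p q s)) = gammaRS n r p q s}

end

end OrientedPT

/-!
An orientation-reversing sequence that is not order-reversing consists of two decreasing blocks, the
second one dominating the first. Let `p` be the first point of the domain, `q` the first point of
the second block, and put `m = pα`, `t = q - m`. The first block has at most `q - p ≤ t` points and
its values, `m` among them, are at most `m`; the second one has at most `n + 1 - q` points and its
values lie in `[m, q]`. Counting points on the first block and values on the second gives
`|im α| ≤ 2t`; counting values on the first and points on the second gives `|im α| ≤ n + 1 - t`.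
Whatever `t` is, one of these bounds is at most `n - ⌊n/3⌋`. Balancing them, i.e.
`t = p = ⌊n/3⌋ + 1`, leads to `γ_{p,2p}`, which attains the bound.
-/

namespace OrientedPT

section CyclicAscents

variable {β : Type*} {D : Set ℕ} {v : ℕ → β} {a b p q x y M : ℕ}

theorem isLeast_cycSucc (hb : b ∈ D) (hab : a < b) : IsLeast {x ∈ D | a < x} (cycSucc D a) := by
  have hne : {x ∈ D | a < x}.Nonempty := ⟨b, hb, hab⟩
  rw [cycSucc, if_pos hne]
  exact ⟨Nat.sInf_mem hne, fun _ hz => Nat.sInf_le hz⟩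

theorem cycSucc_eq_of_isGreatest_of_isLeast (hM : IsGreatest D M) (hp : IsLeast D p) :
    cycSucc D M = p := by
  rw [cycSucc, if_neg fun ⟨_, hz, hMz⟩ => (hM.2 hz).not_gt hMz, hp.csInf_eq]

/-- The cyclic ascents of the sequence `v` indexed by `D`. Values in an arbitrary order allow the
cyclic descents of `v` to be treated as the cyclic ascents of `OrderDual.toDual ∘ v`. -/
def cycAscents [LT β] (D : Set ℕ) (v : ℕ → β) : Set ℕ := {a ∈ D | v a < v (cycSucc D a)}

/-- `v` is decreasing on each of the two (possibly empty) blocks into which `q` cuts `D`, and its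
values on the second block dominate those on the first. -/
structure IsReversingCut [Preorder β] (D : Set ℕ) (v : ℕ → β) (q : ℕ) : Prop where
  antitoneOn_left : AntitoneOn v (D ∩ Set.Iio q)
  antitoneOn_right : AntitoneOn v (D ∩ Set.Ici q)
  left_le_right : ∀ x ∈ D ∩ Set.Iio q, ∀ y ∈ D ∩ Set.Ici q, v x ≤ v y

variable [LinearOrder β]

theorem exists_mem_cycAscents_of_lt (hx : x ∈ D) (hy : y ∈ D) (hxy : x < y) (hv : v x < v y) :
    ∃ a ∈ cycAscents D v, x ≤ a ∧ a < cycSucc D a ∧ cycSucc D a ≤ y := by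
  -- The last point before `y` with a value below `v y` is an ascent.
  let S : Set ℕ := {z ∈ D | x ≤ z ∧ z < y ∧ v z < v y}
  have hS : S.Finite := (Set.finite_Iio y).subset fun z hz => hz.2.2.1
  obtain ⟨a, ⟨haD, hxa, hay, hva⟩, hmax⟩ := hS.exists_maximal ⟨x, hx, le_rfl, hxy, hv⟩
  obtain ⟨⟨hsD, has⟩, hmin⟩ := isLeast_cycSucc hy hay
  have hsy : cycSucc D a ≤ y := hmin ⟨hy, hay⟩
  refine ⟨a, ⟨haD, ?_⟩, hxa, has, hsy⟩
  rcases hsy.eq_or_lt with hs | hs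
  · rwa [hs]
  · by_contra! hle
    exact has.not_ge (hmax ⟨hsD, hxa.trans has.le, hs, hle.trans_lt hva⟩ has.le)

theorem antitoneOn_of_subsingleton_cycAscents (hasc : (cycAscents D v).Subsingleton)
    (hp : IsLeast D p) (hM : IsGreatest D M) (hMp : v M < v p) : AntitoneOn v D := by
  have hMasc : M ∈ cycAscents D v :=
    ⟨hM.1, by rwa [cycSucc_eq_of_isGreatest_of_isLeast hM hp]⟩
  intro x hx y hy hxy
  by_contra! hv
  obtain ⟨a, ha, -, has, hsy⟩ :=
    exists_mem_cycAscents_of_lt hx hy (hxy.lt_of_ne (by rintro rfl; exact hv.false)) hv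
  have : M < y := hasc ha hMasc ▸ has.trans_le hsy
  exact this.not_ge (hM.2 hy)

theorem exists_isReversingCut (hasc : (cycAscents D v).Subsingleton) (hp : IsLeast D p)
    (hM : IsGreatest D M) (hanti : ¬ AntitoneOn v D) :
    ∃ q ∈ D, p < q ∧ IsReversingCut D v q := by
  have hpM : v p ≤ v M :=
    not_lt.mp fun h => hanti (antitoneOn_of_subsingleton_cycAscents hasc hp hM h)
  have exists_ascent {x y : ℕ} (hx : x ∈ D) (hy : y ∈ D) (hxy : x ≤ y) (hv : v x < v y) :=
    exists_mem_cycAscents_of_lt hx hy (hxy.lt_of_ne (by rintro rfl; exact hv.false)) hv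
  simp only [AntitoneOn, not_forall, not_le] at hanti
  obtain ⟨x, hx, y, hy, hxy, hv⟩ := hanti
  obtain ⟨a, ha, -, haq, hqy⟩ := exists_ascent hx hy hxy hv
  set q := cycSucc D a
  have hqD : q ∈ D := (isLeast_cycSucc hy (haq.trans_le hqy)).1.1
  have hpq : p < q := (hp.2 ha.1).trans_lt haq
  have hleft : AntitoneOn v (D ∩ Set.Iio q) := by
    rintro x ⟨hx, -⟩ y ⟨hy, hyq⟩ hxy
    by_contra! hv
    obtain ⟨b, hb, -, -, hby⟩ := exists_ascent hx hy hxy hv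
    rw [hasc hb ha] at hby
    exact hby.not_gt hyq
  have hright : AntitoneOn v (D ∩ Set.Ici q) := by
    rintro x ⟨hx, hqx⟩ y ⟨hy, -⟩ hxy
    by_contra! hv
    obtain ⟨b, hb, hxb, -, -⟩ := exists_ascent hx hy hxy hv
    rw [hasc hb ha] at hxb
    exact haq.not_ge (hqx.trans hxb)
  refine ⟨q, hqD, hpq, hleft, hright, fun x hx y hy => ?_⟩
  calc v x ≤ v p := hleft ⟨hp.1, hpq⟩ hx (hp.2 hx.1)
    _ ≤ v M := hpM
    _ ≤ v y := hright hy ⟨hM.1, hM.2 hqD⟩ (hM.2 hy.1)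

namespace IsReversingCut

theorem subsingleton_cycAscents (h : IsReversingCut D v q) : (cycAscents D v).Subsingleton := by
  suffices hlt : ∀ a ∈ cycAscents D v, ∀ b ∈ cycAscents D v, ¬ a < b from
    fun a ha b hb => le_antisymm (not_lt.mp (hlt b hb a ha)) (not_lt.mp (hlt a ha b hb))
  rintro a ⟨haD, hva⟩ b ⟨hbD, hvb⟩ hab
  obtain ⟨⟨hsD, has⟩, hmin⟩ := isLeast_cycSucc hbD hab
  have haq : a < q := by
    by_contra! hqa
    exact hva.not_ge (h.antitoneOn_right ⟨haD, hqa⟩ ⟨hsD, hqa.trans has.le⟩ has.le)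
  have hqb : q ≤ b := by
    by_contra! hbq
    have hsq := (hmin ⟨hbD, hab⟩).trans_lt hbq
    exact hva.not_ge (h.antitoneOn_left ⟨haD, haq⟩ ⟨hsD, hsq⟩ has.le)
  by_cases hbM : IsGreatest D b
  · have hp : IsLeast D (sInf D) := ⟨Nat.sInf_mem ⟨a, haD⟩, fun _ hz => Nat.sInf_le hz⟩
    rw [cycSucc_eq_of_isGreatest_of_isLeast hbM hp] at hvb
    exact hvb.not_ge (h.left_le_right _ ⟨hp.1, (hp.2 haD).trans_lt haq⟩ b ⟨hbD, hqb⟩)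
  · obtain ⟨c, hcD, hbc⟩ : ∃ c ∈ D, b < c := by
      simpa [IsGreatest, hbD, mem_upperBounds] using hbM
    obtain ⟨⟨htD, hbt⟩, -⟩ := isLeast_cycSucc hcD hbc
    exact hvb.not_ge (h.antitoneOn_right ⟨hbD, hqb⟩ ⟨htD, hqb.trans hbt.le⟩ hbt.le)

end IsReversingCut

end CyclicAscents

namespace IsReversingCut

variable {D : Set ℕ} {v : ℕ → ℕ} {n p q : ℕ}

theorem ncard_image_le_sub_add_sub (h : IsReversingCut D v q) (hp : IsLeast D p) (hq : q ∈ D)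
    (hpq : p < q) : (v '' D).ncard ≤ (q - p) + (v q - v p) := by
  have hsub : v '' D ⊆ v '' Set.Ico p q ∪ Set.Ioc (v p) (v q) := by
    rintro _ ⟨x, hx, rfl⟩
    rcases lt_or_ge x q with hxq | hqx
    · exact Or.inl ⟨x, ⟨hp.2 hx, hxq⟩, rfl⟩
    · rcases (h.left_le_right p ⟨hp.1, hpq⟩ x ⟨hx, hqx⟩).eq_or_lt with hpx | hpx
      · exact Or.inl ⟨p, ⟨le_rfl, hpq⟩, hpx⟩
      · exact Or.inr ⟨hpx, h.antitoneOn_right ⟨hq, Set.self_mem_Ici⟩ ⟨hx, hqx⟩ hqx⟩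
  calc (v '' D).ncard ≤ (v '' Set.Ico p q ∪ Set.Ioc (v p) (v q)).ncard :=
        Set.ncard_le_ncard hsub (((Set.finite_Ico p q).image v).union (Set.finite_Ioc _ _))
    _ ≤ (v '' Set.Ico p q).ncard + (Set.Ioc (v p) (v q)).ncard := Set.ncard_union_le _ _
    _ ≤ (Set.Ico p q).ncard + (Set.Ioc (v p) (v q)).ncard :=
        Nat.add_le_add_right (Set.ncard_image_le (Set.finite_Ico p q)) _
    _ = (q - p) + (v q - v p) := by simp [Set.ncard_eq_toFinset_card']

theorem ncard_image_le_val_add_sub (h : IsReversingCut D v q) (hp : IsLeast D p) (hpq : p < q)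
    (hD : ∀ x ∈ D, x ≤ n) (hv : ∀ x ∈ D, 1 ≤ v x) : (v '' D).ncard ≤ v p + (n + 1 - q) := by
  have hsub : v '' D ⊆ Set.Icc 1 (v p) ∪ v '' Set.Icc q n := by
    rintro _ ⟨x, hx, rfl⟩
    rcases lt_or_ge x q with hxq | hqx
    · exact Or.inl ⟨hv x hx, h.antitoneOn_left ⟨hp.1, hpq⟩ ⟨hx, hxq⟩ (hp.2 hx)⟩
    · exact Or.inr ⟨x, ⟨hqx, hD x hx⟩, rfl⟩
  calc (v '' D).ncard ≤ (Set.Icc 1 (v p) ∪ v '' Set.Icc q n).ncard :=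
        Set.ncard_le_ncard hsub ((Set.finite_Icc _ _).union ((Set.finite_Icc q n).image v))
    _ ≤ (Set.Icc 1 (v p)).ncard + (v '' Set.Icc q n).ncard := Set.ncard_union_le _ _
    _ ≤ (Set.Icc 1 (v p)).ncard + (Set.Icc q n).ncard :=
        Nat.add_le_add_left (Set.ncard_image_le (Set.finite_Icc q n)) _
    _ = v p + (n + 1 - q) := by simp [Set.ncard_eq_toFinset_card']

end IsReversingCut

section PartialTransformations

variable {f : PTrans} {n x y : ℕ}

theorem val_eq_of_apply_eq_some (h : f x = some y) : val f x = y := by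
  simp [val, h]

theorem apply_eq_some_iff : f x = some y ↔ x ∈ domSet f ∧ val f x = y := by
  cases h : f x <;> simp [domSet, val, h]

theorem im_eq_image_val (f : PTrans) : im f = val f '' domSet f := by
  ext y
  simp only [im, Set.mem_ofPred_eq, Set.mem_image, apply_eq_some_iff]

theorem orderDecr_iff_val_le : OrderDecr f ↔ ∀ x ∈ domSet f, val f x ≤ x := by
  simp [OrderDecr, apply_eq_some_iff]

theorem orderPres_iff_monotoneOn : OrderPres f ↔ MonotoneOn (val f) (domSet f) := by
  simp only [OrderPres, MonotoneOn, apply_eq_some_iff]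
  grind

theorem orderRev_iff_antitoneOn : OrderRev f ↔ AntitoneOn (val f) (domSet f) := by
  simp only [OrderRev, AntitoneOn, apply_eq_some_iff]
  grind

theorem orientRev_iff_subsingleton_cycAscents (hfin : (domSet f).Finite) :
    OrientRev f ↔ (cycAscents (domSet f) (val f)).Subsingleton :=
  have : Finite (ascents f) := hfin.subset (Set.sep_subset _ _)
  Set.ncard_le_one_iff_subsingleton

theorem orientPres_iff_subsingleton_cycAscents (hfin : (domSet f).Finite) :
    OrientPres f ↔ (cycAscents (domSet f) (OrderDual.toDual ∘ val f)).Subsingleton :=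
  have : Finite (descents f) := hfin.subset (Set.sep_subset _ _)
  Set.ncard_le_one_iff_subsingleton

theorem OrientPres.orderPres {p M : ℕ} (hf : OrientPres f) (hp : IsLeast (domSet f) p)
    (hM : IsGreatest (domSet f) M) (hpM : val f p < val f M) : OrderPres f := by
  have hfin : (domSet f).Finite := (Set.finite_Iic M).subset hM.2
  rw [orientPres_iff_subsingleton_cycAscents hfin] at hf
  exact orderPres_iff_monotoneOn.mpr
    (antitoneOn_toDual_comp_iff.mp (antitoneOn_of_subsingleton_cycAscents hf hp hM hpM))

theorem OrientRev.exists_isReversingCut (hf : OrientRev f) (hfin : (domSet f).Finite)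
    (hrev : ¬ OrderRev f) :
    ∃ p q, IsLeast (domSet f) p ∧ q ∈ domSet f ∧ p < q ∧
      IsReversingCut (domSet f) (val f) q := by
  rw [orderRev_iff_antitoneOn] at hrev
  have hne : (domSet f).Nonempty := by
    by_contra! hempty
    exact hrev (hempty ▸ Set.subsingleton_empty.antitoneOn _)
  obtain ⟨p, hp⟩ := hfin.bddBelow.exists_isLeast_of_nonempty hne
  obtain ⟨M, hM⟩ := hfin.bddAbove.exists_isGreatest_of_nonempty hne
  obtain ⟨q, hq, hpq, hcut⟩ := OrientedPT.exists_isReversingCut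
    ((orientRev_iff_subsingleton_cycAscents hfin).mp hf) hp hM hrev
  exact ⟨p, q, hp, hq, hpq, hcut⟩

theorem mem_PRDstar_iff : f ∈ PRDstar n ↔
    IsPT n f ∧ OrderDecr f ∧ OrientRev f ∧ ¬ OrientPres f ∧ ¬ IsMonotone f := by
  simp only [PRDstar, PORDstar, POPD, PORD, PMD, Oriented, Set.mem_sdiff, Set.mem_ofPred_eq]
  tauto

theorem OrientRev.ncard_im_le (hf : OrientRev f) (hpt : IsPT n f) (hdec : OrderDecr f)
    (hrev : ¬ OrderRev f) : (im f).ncard ≤ n - n / 3 := by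
  have hfin : (domSet f).Finite := (Set.finite_Icc 1 n).subset hpt.1
  obtain ⟨p, q, hp, hq, hpq, hcut⟩ := hf.exists_isReversingCut hfin hrev
  rw [orderDecr_iff_val_le] at hdec
  rw [IsPT, im_eq_image_val] at hpt
  rw [im_eq_image_val]
  have hwide := hcut.ncard_image_le_sub_add_sub hp hq hpq
  have hnarrow := hcut.ncard_image_le_val_add_sub hp hpq (fun x hx => (hpt.1 hx).2)
    (fun x hx => (hpt.2 (Set.mem_image_of_mem _ hx)).1)
  have hpp := hdec p hp.1
  have hqq := hdec q hq
  have hqn := (hpt.1 hq).2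
  omega

end PartialTransformations

section Gamma

variable {n p q x : ℕ}

theorem domSet_gamma (n p q : ℕ) : domSet (gamma n p q) =
    Set.Icc p (p + min (p - 1) (q - p - 1)) ∪ Set.Icc q (q + min (q - p - 1) (n - q)) := by
  ext x
  simp only [domSet, gamma, Set.mem_ofPred_eq, Set.mem_union, Set.mem_Icc]
  split_ifs <;> simp_all

theorem val_gamma_left (hx : x ∈ Set.Icc p (p + min (p - 1) (q - p - 1))) :
    val (gamma n p q) x = 2 * p - x :=
  val_eq_of_apply_eq_some (if_pos hx)

theorem val_gamma_right (hpq : p < q) (hx : x ∈ Set.Icc q (q + min (q - p - 1) (n - q))) :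
    val (gamma n p q) x = 2 * q - x := by
  have hx_left : ¬ (p ≤ x ∧ x ≤ p + min (p - 1) (q - p - 1)) := by
    have := hx.1
    omega
  exact val_eq_of_apply_eq_some ((if_neg hx_left).trans (if_pos hx))

theorem isReversingCut_gamma (hpq : p < q) :
    IsReversingCut (domSet (gamma n p q)) (val (gamma n p q)) q := by
  have hleft : ∀ x ∈ domSet (gamma n p q) ∩ Set.Iio q,
      x ∈ Set.Icc p (p + min (p - 1) (q - p - 1)) := by
    rw [domSet_gamma]
    rintro x ⟨hx | hx, hxq⟩
    · exact hx
    · exact absurd hx.1 (not_le.mpr hxq)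
  have hright : ∀ x ∈ domSet (gamma n p q) ∩ Set.Ici q,
      x ∈ Set.Icc q (q + min (q - p - 1) (n - q)) := by
    rw [domSet_gamma]
    rintro x ⟨hx | hx, hqx : q ≤ x⟩
    · have := hx.2
      omega
    · exact hx
  refine ⟨fun x hx y hy hxy => ?_, fun x hx y hy hxy => ?_, fun x hx y hy => ?_⟩
  · rw [val_gamma_left (hleft x hx), val_gamma_left (hleft y hy)]
    omega
  · rw [val_gamma_right hpq (hright x hx), val_gamma_right hpq (hright y hy)]
    omega
  · rw [val_gamma_left (hleft x hx), val_gamma_right hpq (hright y hy)]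
    have := (hleft x hx).1
    have := (hright y hy).2
    omega

theorem isLeast_domSet_gamma (hpq : p < q) : IsLeast (domSet (gamma n p q)) p := by
  rw [domSet_gamma]
  refine ⟨Or.inl ⟨le_rfl, Nat.le_add_right _ _⟩, ?_⟩
  rintro x (hx | hx)
  · exact hx.1
  · exact hpq.le.trans hx.1

theorem isGreatest_domSet_gamma (hpq : p < q) :
    IsGreatest (domSet (gamma n p q)) (q + min (q - p - 1) (n - q)) := by
  rw [domSet_gamma]
  refine ⟨Or.inr ⟨Nat.le_add_right _ _, le_rfl⟩, ?_⟩
  rintro x (⟨-, hx⟩ | ⟨-, hx⟩) <;> omega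

theorem im_gamma (hpq : p < q) : im (gamma n p q) =
    Set.Icc (p - min (p - 1) (q - p - 1)) p ∪ Set.Icc (q - min (q - p - 1) (n - q)) q := by
  have reflect {c k : ℕ} (hk : k ≤ c) :
      (fun x => 2 * c - x) '' Set.Icc c (c + k) = Set.Icc (c - k) c := by
    ext y
    simp only [Set.mem_image, Set.mem_Icc]
    exact ⟨by omega, fun _ => ⟨2 * c - y, by omega⟩⟩
  rw [im_eq_image_val, domSet_gamma, Set.image_union,
    Set.image_congr fun x hx => val_gamma_left hx,
    Set.image_congr fun x hx => val_gamma_right hpq hx, reflect (by omega), reflect (by omega)]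

theorem ncard_im_gamma (hpq : p < q) : (im (gamma n p q)).ncard =
    (min (p - 1) (q - p - 1) + 1) + (min (q - p - 1) (n - q) + 1) := by
  have hdisj : Disjoint (Set.Icc (p - min (p - 1) (q - p - 1)) p)
      (Set.Icc (q - min (q - p - 1) (n - q)) q) := by
    rw [Set.disjoint_left]
    rintro x ⟨-, hxp⟩ ⟨hqx, -⟩
    omega
  rw [im_gamma hpq, Set.ncard_union_eq hdisj]
  simp only [Set.ncard_eq_toFinset_card', Set.toFinset_Icc, Nat.card_Icc]
  omega

theorem isPT_gamma (hp : 1 ≤ p) (hpq : p < q) (hqn : q ≤ n) : IsPT n (gamma n p q) := by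
  rw [IsPT, domSet_gamma, im_gamma hpq]
  constructor <;> rintro x (⟨hx₁, hx₂⟩ | ⟨hx₁, hx₂⟩) <;> constructor <;> omega

theorem orderDecr_gamma (hpq : p < q) : OrderDecr (gamma n p q) := by
  rw [orderDecr_iff_val_le, domSet_gamma]
  rintro x (hx | hx)
  · rw [val_gamma_left hx]
    have := hx.1
    omega
  · rw [val_gamma_right hpq hx]
    have := hx.1
    omega

theorem not_orderRev_gamma (hpq : p < q) : ¬ OrderRev (gamma n p q) := by
  rw [orderRev_iff_antitoneOn, domSet_gamma]
  intro hanti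
  have hp : p ∈ Set.Icc p (p + min (p - 1) (q - p - 1)) := ⟨le_rfl, Nat.le_add_right _ _⟩
  have hq : q ∈ Set.Icc q (q + min (q - p - 1) (n - q)) := ⟨le_rfl, Nat.le_add_right _ _⟩
  have := hanti (Or.inl hp) (Or.inr hq) hpq.le
  rw [val_gamma_left hp, val_gamma_right hpq hq] at this
  omega

theorem not_orderPres_gamma (hpq : p + 2 ≤ q) (h : 1 < p ∨ q < n) :
    ¬ OrderPres (gamma n p q) := by
  rw [orderPres_iff_monotoneOn, domSet_gamma]
  intro hmono
  rcases h with hp | hqn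
  · have hp₀ : p ∈ Set.Icc p (p + min (p - 1) (q - p - 1)) := by constructor <;> omega
    have hp₁ : p + 1 ∈ Set.Icc p (p + min (p - 1) (q - p - 1)) := by constructor <;> omega
    have := hmono (Or.inl hp₀) (Or.inl hp₁) p.le_succ
    rw [val_gamma_left hp₀, val_gamma_left hp₁] at this
    omega
  · have hq₀ : q ∈ Set.Icc q (q + min (q - p - 1) (n - q)) := by constructor <;> omega
    have hq₁ : q + 1 ∈ Set.Icc q (q + min (q - p - 1) (n - q)) := by constructor <;> omega
    have := hmono (Or.inr hq₀) (Or.inr hq₁) q.le_succ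
    rw [val_gamma_right (by omega) hq₀, val_gamma_right (by omega) hq₁] at this
    omega

theorem gamma_mem_PRDstar (hp : 1 ≤ p) (hpq : p + 2 ≤ q) (hqn : q ≤ n) (h : 1 < p ∨ q < n) :
    gamma n p q ∈ PRDstar n := by
  have hlt : p < q := by omega
  have hleast := isLeast_domSet_gamma (n := n) hlt
  have hgreatest := isGreatest_domSet_gamma (n := n) hlt
  have hfirst_last :
      val (gamma n p q) p < val (gamma n p q) (q + min (q - p - 1) (n - q)) := by
    rw [val_gamma_left ⟨le_rfl, Nat.le_add_right _ _⟩,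
      val_gamma_right hlt ⟨Nat.le_add_right _ _, le_rfl⟩]
    omega
  have hpres : ¬ OrderPres (gamma n p q) := not_orderPres_gamma hpq h
  have hfin : (domSet (gamma n p q)).Finite := (Set.finite_Iic _).subset hgreatest.2
  exact mem_PRDstar_iff.mpr ⟨isPT_gamma hp hlt hqn, orderDecr_gamma hlt,
    (orientRev_iff_subsingleton_cycAscents hfin).mpr
      (isReversingCut_gamma hlt).subsingleton_cycAscents,
    fun hf => hpres (hf.orderPres hleast hgreatest hfirst_last),
    not_or.mpr ⟨hpres, not_orderRev_gamma hlt⟩⟩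

end Gamma

end OrientedPT

open OrientedPT in
/-- For `n ≥ 4`, the maximum of `|im α|` over
`α ∈ PRD_n^*` equals `n − ⌊n/3⌋`. -/
theorem max_image_card_PRDstar (n : ℕ) (hn : 4 ≤ n) :
    IsGreatest {k : ℕ | ∃ f ∈ PRDstar n, (im f).ncard = k} (n - n / 3) := by
  constructor
  · set d := n / 3 + 1
    refine ⟨gamma n d (2 * d),
      gamma_mem_PRDstar (by omega) (by omega) (by omega) (Or.inl (by omega)), ?_⟩
    rw [ncard_im_gamma (by omega)]
    omega
  · rintro k ⟨f, hf, rfl⟩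
    obtain ⟨hpt, hdec, hrev, -, hmono⟩ := mem_PRDstar_iff.mp hf
    exact hrev.ncard_im_le hpt hdec fun h => hmono (Or.inr h)
end

section
/- For all order-decreasing partial transformations δ and λ on X_n, fix(δλ) = fix(δ) ∩ fix(λ). -/
section PartialMap

variable {α : Type*} {f g : α → Option α}

theorem inter_fixed_subset_fixed_bind :
    {x | f x = some x} ∩ {x | g x = some x} ⊆ {x | (f x).bind g = some x} :=
  fun x ⟨hfx, hgx⟩ => Option.bind_eq_some_iff.2 ⟨x, hfx, hgx⟩

variable [PartialOrder α]

theorem fixed_bind_subset_inter_fixed (hf : ∀ x y, f x = some y → y ≤ x)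
    (hg : ∀ x y, g x = some y → y ≤ x) :
    {x | (f x).bind g = some x} ⊆ {x | f x = some x} ∩ {x | g x = some x} := by
  intro x hx
  obtain ⟨y, hxy, hyx⟩ := Option.bind_eq_some_iff.1 hx
  obtain rfl : y = x := le_antisymm (hf x y hxy) (hg y x hyx)
  exact ⟨hxy, hyx⟩

theorem fix_mul_of_orderDecr_general (hf : ∀ x y, f x = some y → y ≤ x)
    (hg : ∀ x y, g x = some y → y ≤ x) :
    {x | (f x).bind g = some x} = {x | f x = some x} ∩ {x | g x = some x} :=
  (fixed_bind_subset_inter_fixed hf hg).antisymm inter_fixed_subset_fixed_bind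

end PartialMap

open OrientedPT in
/-- For order-decreasing partial transformations `δ, μ` on `X_n`,
`fix(δμ) = fix(δ) ∩ fix(μ)`. -/
theorem fix_mul_of_orderDecr (n : ℕ) (δ μ : PTrans)
    (hδ : IsPT n δ) (hδd : OrderDecr δ) (hμ : IsPT n μ) (hμd : OrderDecr μ) :
    fixSet (δ * μ) = fixSet δ ∩ fixSet μ :=
  fix_mul_of_orderDecr_general hδd hμd
end

section
/- Let n ≥ 4. For every α ∈ PORD_n^* (i.e. every oriented order-decreasing partial transformation on X_n that is not orientation-preserving), |fix(α)| ≤ 2. -/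
/-!
Between two fixed points `x < y` the value rises from `x` to `y`, so somewhere in `[x, y)` there is
an ascent. Hence the ascents separate the fixed points, and there are at most `#ascents + 1` fixed
points; an oriented map that is not orientation-preserving has at most one ascent.
-/

theorem encard_le_encard_add_one_of_interleaved {α : Type*} [LinearOrder α] {s t : Set α}
    (h : ∀ x ∈ s, ∀ y ∈ s, x < y → ∃ a ∈ t, x ≤ a ∧ a < y) : s.encard ≤ t.encard + 1 := by
  obtain ht | ht := t.finite_or_infinite
  case inr => simp [ht.encard_eq]
  -- Points of `s` are told apart by how many elements of `t` lie below them.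
  let countBelow (x : α) : ℕ := (t ∩ Set.Iio x).ncard
  have countBelow_strictMonoOn : StrictMonoOn countBelow s := by
    intro x hx y hy hxy
    obtain ⟨a, hat, hxa, hay⟩ := h x hx y hy hxy
    have hsub : t ∩ Set.Iio x ⊆ t ∩ Set.Iio y :=
      Set.inter_subset_inter_right t (Set.Iio_subset_Iio hxy.le)
    exact Set.ncard_lt_ncard ((Set.ssubset_iff_of_subset hsub).2
      ⟨a, ⟨hat, hay⟩, fun hax => hxa.not_gt hax.2⟩) (ht.inter_of_left _)
  have countBelow_mapsTo : Set.MapsTo countBelow s (Set.Iio (t.ncard + 1)) := fun _ _ =>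
    Nat.lt_succ_of_le (Set.ncard_le_ncard Set.inter_subset_left ht)
  calc s.encard ≤ (Set.Iio (t.ncard + 1)).encard :=
        Set.encard_le_encard_of_injOn countBelow_mapsTo countBelow_strictMonoOn.injOn
    _ = t.encard + 1 := by
        simp [Set.encard_eq_coe_toFinset_card, ← ht.cast_ncard_eq]

namespace OrientedPT

theorem mem_domSet_of_mem_fixSet {f : PTrans} {x : ℕ} (h : x ∈ fixSet f) : x ∈ domSet f :=
  Option.ne_none_iff_exists'.2 ⟨x, h⟩

theorem val_of_mem_fixSet {f : PTrans} {x : ℕ} (h : x ∈ fixSet f) : val f x = x :=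
  congrArg (Option.getD · 0) h

theorem isLeast_cycSucc_s2 {D : Set ℕ} {x : ℕ} (h : {z ∈ D | x < z}.Nonempty) :
    IsLeast {z ∈ D | x < z} (cycSucc D x) := by
  rw [cycSucc, if_pos h]
  exact ⟨Nat.sInf_mem h, fun _ => Nat.sInf_le⟩

theorem exists_mem_ascents_of_val_lt {f : PTrans} {x y : ℕ} (hx : x ∈ domSet f)
    (hy : y ∈ domSet f) (hxy : x < y) (hval : val f x < val f y) :
    ∃ a ∈ ascents f, x ≤ a ∧ a < y := by
  -- The last point of `[x, y)` with value below `val f y` is an ascent.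
  let low : Set ℕ := {z ∈ domSet f | z < y ∧ val f z < val f y}
  have low_finite : low.Finite := (Set.finite_Iio y).subset fun _ hz => hz.2.1
  obtain ⟨a, hxa, ha⟩ := low_finite.exists_le_maximal (show x ∈ low from ⟨hx, hxy, hval⟩)
  obtain ⟨haD, hay, hav⟩ := ha.prop
  obtain ⟨⟨succ_mem, lt_succ⟩, succ_le⟩ := isLeast_cycSucc_s2 ⟨y, hy, hay⟩
  have le_val_succ : val f y ≤ val f (cycSucc (domSet f) a) := by
    by_contra! hlt
    have succ_lt : cycSucc (domSet f) a < y :=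
      (succ_le ⟨hy, hay⟩).lt_of_ne fun heq => (heq ▸ hlt).false
    exact ha.not_gt ⟨succ_mem, succ_lt, hlt⟩ lt_succ
  exact ⟨a, ⟨haD, hav.trans_le le_val_succ⟩, hxa, hay⟩

theorem encard_le_encard_ascents_add_one {f : PTrans} {s : Set ℕ} (hs : s ⊆ domSet f)
    (hmono : StrictMonoOn (val f) s) : s.encard ≤ (ascents f).encard + 1 :=
  encard_le_encard_add_one_of_interleaved fun _ hx _ hy hxy =>
    exists_mem_ascents_of_val_lt (hs hx) (hs hy) hxy (hmono hx hy hxy)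

theorem encard_fixSet_le_encard_ascents_add_one (f : PTrans) :
    (fixSet f).encard ≤ (ascents f).encard + 1 :=
  encard_le_encard_ascents_add_one (fun _ => mem_domSet_of_mem_fixSet)
    (strictMonoOn_id.congr fun _ hx => (val_of_mem_fixSet hx).symm)

theorem PORDstar.orientRev {n : ℕ} {f : PTrans} (hf : f ∈ PORDstar n) : OrientRev f :=
  hf.1.2.1.resolve_left fun hpres => hf.2 ⟨hf.1, hpres⟩

theorem IsPT.finite_ascents {n : ℕ} {f : PTrans} (hf : IsPT n f) : (ascents f).Finite :=
  (Set.finite_Icc 1 n).subset fun _ ha => hf.1 ha.1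

end OrientedPT

open OrientedPT in
theorem fix_card_le_two_of_PORDstar_general {f : PTrans} (hfin : (ascents f).Finite)
    (hrev : OrientRev f) : (fixSet f).ncard ≤ 2 := by
  -- `OrientRev` counts with `ncard`, which is `0` on infinite sets.
  have ascents_le : (ascents f).encard ≤ 1 := by
    rw [← hfin.cast_ncard_eq]
    exact_mod_cast hrev
  refine ENat.toNat_le_of_le_natCast ?_
  calc (fixSet f).encard ≤ (ascents f).encard + 1 := encard_fixSet_le_encard_ascents_add_one f
    _ ≤ 1 + 1 := by gcongr
    _ = 2 := one_add_one_eq_two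

open OrientedPT in
/-- For `n ≥ 4`, every `α ∈ PORD_n^*` has at most two fixed points. -/
theorem fix_card_le_two_of_PORDstar (n : ℕ) (hn : 4 ≤ n) :
    ∀ f ∈ PORDstar n, (fixSet f).ncard ≤ 2 :=
  fun _ hf => fix_card_le_two_of_PORDstar_general hf.1.1.finite_ascents (PORDstar.orientRev hf)
end

section
/- Let n ≥ 4 and 3 ≤ r ≤ n−1. Every idempotent ε of PORD_n with |im(ε)| = r is undecomposable in PORD(n,r): whenever ε = αβ with α, β ∈ PORD(n,r), then ε = α or ε = β. -/
/-!
Suppose the idempotent `ε = αβ` is a product of order-decreasing maps. A point `y` of `im ε` is fixed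
by `ε`, so `y = (yα)β ≤ yα ≤ y` and both factors fix `y`. Hence `im ε ⊆ im α`, and the bound on
`|im α|` makes this an equality; then `β` fixes `im α` pointwise, that is, `αβ = α`.
-/

namespace OrientedPT

theorem fixSet_subset_im (α : PTrans) : fixSet α ⊆ im α := fun x hx => ⟨x, hx⟩

theorem mul_eq_left_iff_im_subset_fixSet {α β : PTrans} : α * β = α ↔ im α ⊆ fixSet β := by
  constructor
  · rintro h y ⟨x, hx⟩
    have hxy := congrFun h x
    rwa [mul_apply, hx] at hxy
  · intro h
    funext x
    rw [mul_apply]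
    cases hx : α x with
    | none => rfl
    | some y => exact h ⟨x, hx⟩

theorem OrderDecr.fixSet_mul {α β : PTrans} (hα : OrderDecr α) (hβ : OrderDecr β) :
    fixSet (α * β) = fixSet α ∩ fixSet β := by
  ext x
  constructor
  · intro hx
    obtain ⟨y, hxy, hyx⟩ : ∃ y, α x = some y ∧ β y = some x := Option.bind_eq_some_iff.mp hx
    obtain rfl : y = x := le_antisymm (hα x y hxy) (hβ y x hyx)
    exact ⟨hxy, hyx⟩
  · rintro ⟨hαx, hβx⟩
    exact Option.bind_eq_some_iff.mpr ⟨x, hαx, hβx⟩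

end OrientedPT

open OrientedPT in
theorem idempotent_undecomposable_general {S : Set PTrans} {ε : PTrans} (hid : ε * ε = ε)
    (hdecr : ∀ α ∈ S, OrderDecr α) (hfin : ∀ α ∈ S, (im α).Finite)
    (hcard : ∀ α ∈ S, (im α).ncard ≤ (im ε).ncard) :
    Undecomposable S ε := by
  rintro α hα β hβ rfl
  have him_fix : im (α * β) ⊆ fixSet α ∩ fixSet β := by
    rw [← (hdecr α hα).fixSet_mul (hdecr β hβ)]
    exact mul_eq_left_iff_im_subset_fixSet.mp hid
  have him_subset : im (α * β) ⊆ im α := fun y hy => fixSet_subset_im α (him_fix hy).1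
  have him_eq : im (α * β) = im α :=
    Set.eq_of_subset_of_ncard_le him_subset (hcard α hα) (hfin α hα)
  have him_fix_right : im α ⊆ fixSet β := fun y hy => (him_fix (him_eq ▸ hy)).2
  exact Or.inl (mul_eq_left_iff_im_subset_fixSet.mpr him_fix_right)

open OrientedPT in
/-- For `n ≥ 4` and `3 ≤ r ≤ n−1`, every idempotent of `PORD_n`
with image of size exactly `r` is undecomposable in `PORD(n,r)`. -/
theorem idempotent_undecomposable (n r : ℕ) (hn : 4 ≤ n) (hr1 : 3 ≤ r)
    (hr2 : r ≤ n - 1) (ε : PTrans) (hε : ε ∈ PORD n) (hid : ε * ε = ε)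
    (him : (im ε).ncard = r) :
    Undecomposable (PORDr n r) ε :=
  idempotent_undecomposable_general hid (fun _ hα => hα.1.2.2)
    (fun _ hα => (Set.finite_Icc 1 n).subset hα.1.1.2) (fun _ hα => hα.2.trans him.ge)
end

section
/- Let n ≥ 4 and 3 ≤ r ≤ n−1, and let A be a generating set of PORD(n,r). Then for each 1 ≤ p ≤ n−2 and each p+1 ≤ q ≤ p+r−2 ≤ n−1, there exists α ∈ A whose restriction to [p, q+1] equals ξ_{p,q}^r. -/
/-!
If a product `f * g` of order-decreasing maps fixes a point, both factors fix it. Suppose now that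
`f * g` agrees with `ξ_{p,q}` on `[p, q+1]`, so that `f` and `g` fix `[p, q]`. If `f` fixes `q + 1`
as well, then `g` maps `q + 1` to `p`; otherwise `f` maps `q + 1` to some `y ∈ [p, q]`, and `g`
fixes `y`, whence `y = p`. So one of the factors already agrees with `ξ_{p,q}` on `[p, q+1]`, and
by induction on the length of a product, some generator does.
-/

namespace OrientedPT

theorem exists_mem_of_mem_closure {M : Type*} [Mul M] {A : Set M} {P : M → Prop}
    (hP : ∀ x ∈ Subsemigroup.closure A, ∀ y ∈ Subsemigroup.closure A, P (x * y) → P x ∨ P y)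
    {x : M} (hx : x ∈ Subsemigroup.closure A) (hPx : P x) : ∃ a ∈ A, P a := by
  induction hx using Subsemigroup.closure_induction with
  | mem x hx => exact ⟨x, hx, hPx⟩
  | mul x y hx hy ihx ihy => exact (hP x hx y hy hPx).elim ihx ihy

theorem orderDecr_of_mem_PORDr {n r : ℕ} {f : PTrans} (hf : f ∈ PORDr n r) : OrderDecr f :=
  hf.1.2.2

theorem mul_eq_some_iff {f g : PTrans} {x z : ℕ} :
    (f * g) x = some z ↔ ∃ y, f x = some y ∧ g y = some z :=
  Option.bind_eq_some_iff

theorem OrderDecr.fixSet_mul_s5 {f g : PTrans} (hf : OrderDecr f) (hg : OrderDecr g) :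
    fixSet (f * g) = fixSet f ∩ fixSet g := by
  ext x
  refine mul_eq_some_iff.trans ⟨?_, fun ⟨hfx, hgx⟩ => ⟨x, hfx, hgx⟩⟩
  rintro ⟨y, hfy, hgy⟩
  obtain rfl : y = x := le_antisymm (hf _ _ hfy) (hg _ _ hgy)
  exact ⟨hfy, hgy⟩

theorem restrict_domSet_eq_iff {f g : PTrans} :
    restrict f (domSet g) = g ↔ ∀ x y, g x = some y → f x = some y := by
  constructor
  · intro h x y hgx
    have hx : x ∈ domSet g := by simp [domSet, hgx]
    rw [← hgx, ← congrFun h x, restrict, if_pos hx]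
  · intro h
    funext x
    by_cases hx : x ∈ domSet g
    · obtain ⟨y, hgx⟩ := Option.ne_none_iff_exists'.1 hx
      rw [restrict, if_pos hx, hgx, h x y hgx]
    · rw [restrict, if_neg hx, not_not.1 hx]

theorem val_eq_of_eq_some {f : PTrans} {x y : ℕ} (h : f x = some y) : val f x = y := by
  rw [val, h, Option.getD_some]

theorem cycSucc_eq_of_isLeast_gt {D : Set ℕ} {a b : ℕ} (hb : IsLeast {x ∈ D | a < x} b) :
    cycSucc D a = b := by
  rw [cycSucc, if_pos hb.nonempty, hb.csInf_eq]

theorem cycSucc_eq_of_mem_upperBounds {D : Set ℕ} {a b : ℕ} (ha : a ∈ upperBounds D)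
    (hb : IsLeast D b) : cycSucc D a = b := by
  have hempty : ¬{x ∈ D | a < x}.Nonempty := fun ⟨_, hx, hlt⟩ => (ha hx).not_gt hlt
  rw [cycSucc, if_neg hempty, hb.csInf_eq]

theorem cycSucc_Icc_of_lt {p m a : ℕ} (hpa : p ≤ a) (ham : a < m) :
    cycSucc (Set.Icc p m) a = a + 1 :=
  cycSucc_eq_of_isLeast_gt ⟨⟨⟨hpa.trans a.le_succ, ham⟩, a.lt_succ_self⟩, fun _ hx => hx.2⟩

theorem cycSucc_Icc_right {p m : ℕ} (hpm : p ≤ m) : cycSucc (Set.Icc p m) m = p :=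
  cycSucc_eq_of_mem_upperBounds (isGreatest_Icc hpm).2 (isLeast_Icc hpm)

section Xi

variable {p q : ℕ}

theorem xi_eq_some_iff {x y : ℕ} :
    xi p q x = some y ↔ x ∈ Set.Icc p q ∧ y = x ∨ x = q + 1 ∧ y = p := by
  grind [xi]

theorem xi_of_mem_Icc {x : ℕ} (hx : x ∈ Set.Icc p q) : xi p q x = some x :=
  xi_eq_some_iff.2 (Or.inl ⟨hx, rfl⟩)

theorem xi_succ (p q : ℕ) : xi p q (q + 1) = some p :=
  xi_eq_some_iff.2 (Or.inr ⟨rfl, rfl⟩)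

theorem xi_left (hpq : p ≤ q + 1) : xi p q p = some p :=
  xi_eq_some_iff.2 (by rw [Set.mem_Icc]; omega)

theorem domSet_xi (hpq : p ≤ q + 1) : domSet (xi p q) = Set.Icc p (q + 1) := by
  ext x
  simp only [domSet, Set.mem_ofPred_eq, Option.ne_none_iff_exists', xi_eq_some_iff, exists_or,
    exists_and_left, exists_eq, and_true, Set.mem_Icc]
  omega

theorem im_xi_subset (hpq : p ≤ q) : im (xi p q) ⊆ Set.Icc p q := by
  rintro y ⟨x, hxy⟩
  obtain ⟨hx, rfl⟩ | ⟨-, rfl⟩ := xi_eq_some_iff.1 hxy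
  exacts [hx, Set.left_mem_Icc.2 hpq]

theorem orderDecr_xi_iff : OrderDecr (xi p q) ↔ p ≤ q + 1 := by
  refine ⟨fun h => h _ _ (xi_succ p q), fun hpq x y hxy => ?_⟩
  obtain ⟨-, rfl⟩ | ⟨rfl, rfl⟩ := xi_eq_some_iff.1 hxy
  exacts [le_rfl, hpq]

theorem descents_xi_subset (hpq : p ≤ q + 1) : descents (xi p q) ⊆ {q} := by
  rintro a ⟨ha, hdesc⟩
  rw [domSet_xi hpq] at ha hdesc
  obtain haq | rfl | rfl : a < q ∨ a = q ∨ a = q + 1 := by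
    have := ha.2
    omega
  · have hval : val (xi p q) a = a := val_eq_of_eq_some (xi_of_mem_Icc ⟨ha.1, haq.le⟩)
    have hval_succ : val (xi p q) (a + 1) = a + 1 :=
      val_eq_of_eq_some (xi_of_mem_Icc ⟨ha.1.trans a.le_succ, haq⟩)
    rw [cycSucc_Icc_of_lt ha.1 (haq.trans q.lt_succ_self), hval, hval_succ] at hdesc
    exact absurd hdesc a.lt_succ_self.not_gt
  · rfl
  · rw [cycSucc_Icc_right hpq, val_eq_of_eq_some (xi_left hpq),
      val_eq_of_eq_some (xi_succ p q)] at hdesc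
    exact absurd hdesc (lt_irrefl p)

theorem orientPres_xi (hpq : p ≤ q + 1) : OrientPres (xi p q) :=
  (Set.ncard_le_ncard (descents_xi_subset hpq)).trans_eq (Set.ncard_singleton q)

theorem ncard_im_xi_le (hpq : p ≤ q) : (im (xi p q)).ncard ≤ q + 1 - p :=
  (Set.ncard_le_ncard (im_xi_subset hpq)).trans_eq (Set.ncard_Icc_nat p q)

theorem isPT_xi {n : ℕ} (hp : 1 ≤ p) (hpq : p ≤ q) (hqn : q + 1 ≤ n) : IsPT n (xi p q) := by
  constructor
  · rw [domSet_xi (Nat.le_succ_of_le hpq)]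
    exact Set.Icc_subset_Icc hp hqn
  · exact (im_xi_subset hpq).trans (Set.Icc_subset_Icc hp (Nat.le_of_succ_le hqn))

theorem xi_mem_PORDr {n r : ℕ} (hp : 1 ≤ p) (hpq : p ≤ q) (hqn : q + 1 ≤ n)
    (hqr : q + 1 ≤ p + r) : xi p q ∈ PORDr n r :=
  have hpq' : p ≤ q + 1 := Nat.le_succ_of_le hpq
  ⟨⟨isPT_xi hp hpq hqn, Or.inl (orientPres_xi hpq'), orderDecr_xi_iff.2 hpq'⟩,
    (ncard_im_xi_le hpq).trans (Nat.sub_le_iff_le_add'.2 hqr)⟩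

theorem restrict_Icc_eq_xi_iff {f : PTrans} (hpq : p ≤ q + 1) :
    restrict f (Set.Icc p (q + 1)) = xi p q ↔ Set.Icc p q ⊆ fixSet f ∧ f (q + 1) = some p := by
  rw [← domSet_xi hpq, restrict_domSet_eq_iff]
  refine ⟨fun h => ⟨fun x hx => h x x (xi_of_mem_Icc hx), h _ _ (xi_succ p q)⟩, ?_⟩
  rintro ⟨hfix, hsucc⟩ x y hxy
  obtain ⟨hx, rfl⟩ | ⟨rfl, rfl⟩ := xi_eq_some_iff.1 hxy
  exacts [hfix hx, hsucc]

theorem restrict_Icc_eq_xi_of_mul {f g : PTrans} (hf : OrderDecr f) (hg : OrderDecr g)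
    (hpq : p ≤ q + 1) (h : restrict (f * g) (Set.Icc p (q + 1)) = xi p q) :
    restrict f (Set.Icc p (q + 1)) = xi p q ∨ restrict g (Set.Icc p (q + 1)) = xi p q := by
  simp only [restrict_Icc_eq_xi_iff hpq, hf.fixSet_mul_s5 hg, Set.subset_inter_iff] at h ⊢
  obtain ⟨⟨hfix_f, hfix_g⟩, hsucc⟩ := h
  obtain ⟨y, hfy, hgy⟩ := mul_eq_some_iff.1 hsucc
  obtain rfl | hyq := (hf _ _ hfy).eq_or_lt
  · exact Or.inr ⟨hfix_g, hgy⟩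
  · have hy_fixed : g y = some y := hfix_g ⟨hg _ _ hgy, Nat.le_of_lt_succ hyq⟩
    obtain rfl : y = p := Option.some.inj (hy_fixed.symm.trans hgy)
    exact Or.inl ⟨hfix_f, hfy⟩

end Xi

end OrientedPT

open OrientedPT in
theorem genSet_contains_xi_general {S A : Set PTrans} (hS : ∀ f ∈ S, OrderDecr f)
    (hA : IsGenSet S A) {p q : ℕ} (hxi : xi p q ∈ S) :
    ∃ α ∈ A, restrict α (Set.Icc p (q + 1)) = xi p q := by
  have hpq : p ≤ q + 1 := orderDecr_xi_iff.1 (hS _ hxi)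
  have hdecr : ∀ f ∈ Subsemigroup.closure A, OrderDecr f := fun f hf => hS f (hA.2.subset hf)
  have hself : restrict (xi p q) (Set.Icc p (q + 1)) = xi p q :=
    (restrict_Icc_eq_xi_iff hpq).2 ⟨fun _ => xi_of_mem_Icc, xi_succ p q⟩
  exact exists_mem_of_mem_closure
    (fun f hf g hg => restrict_Icc_eq_xi_of_mul (hdecr f hf) (hdecr g hg) hpq)
    (hA.2.superset hxi) hself

open OrientedPT in
/-- For `n ≥ 4`, `3 ≤ r ≤ n−1` and any generating set `A` of
`PORD(n,r)`: for each `1 ≤ p ≤ n−2` and `p+1 ≤ q ≤ p+r−2 ≤ n−1` there is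
`α ∈ A` whose restriction to `[p, q+1]` is `ξ_{p,q}^r`. -/
theorem genSet_contains_xi (n r : ℕ) (hn : 4 ≤ n) (hr1 : 3 ≤ r) (hr2 : r ≤ n - 1)
    (A : Set PTrans) (hA : IsGenSet (PORDr n r) A) :
    ∀ p q : ℕ, 1 ≤ p → p + 2 ≤ n → p + 1 ≤ q → q + 2 ≤ p + r → p + r ≤ n + 1 →
      ∃ α ∈ A, restrict α (Set.Icc p (q + 1)) = xi p q := by
  intro p q hp _ hpq hqr hrn
  exact genSet_contains_xi_general (fun _ => orderDecr_of_mem_PORDr) hA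
    (xi_mem_PORDr hp (by omega) (by omega) (by omega))
end
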